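/- Assume T is trace-class and μ-a.e. point of X is a Lebesgue point of f. Then for μ⊗μ-a.e. pair (x,y) ∈ X × X the series Σᵢ λᵢ (uᵢ(x) - uᵢ(y))² converges absolutely and Σᵢ λᵢ (uᵢ(x) - uᵢ(y))² = d(x,y)². -/

import Mathlib

/-!
The kernel of `T` satisfies `K(x,x) + K(y,y) - 2 K(x,y) = d(x,y)²`, because the marginal and constant
terms of the centering cancel. Hence the theorem follows by adding up three expansions
`K(s,t) = ∑ λᵢ uᵢ(s) uᵢ(t)`, for `(s,t) = (x,x)`, `(y,y)` and `(x,y)`.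

Off the diagonal (`ae_eq_of_tendsto_integral_sq`): the partial sums converge to `K` in `L²(μ ⊗ μ)`,
and they converge absolutely for almost every pair, since `∑ |λᵢ| uᵢ²` has integral `∑ |λᵢ| < ∞` and is
therefore finite almost everywhere. The two limits agree.

On the diagonal (`tsum_diag_eq`): let `x` be a Lebesgue point of `f = ∑ |λᵢ| uᵢ²` at which the series
converges, and write `A_r` for the average over `B_r(x)`. Averaging the off-diagonal expansion over
`B_r(x) × B_r(x)` yields `∑ λᵢ (A_r uᵢ)²`, which tends to `K(x,x)` as `K` is continuous. Each term tends
to `λᵢ uᵢ(x)²` because eigenfunctions for nonzero eigenvalues are continuous, and it is dominated by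
`|λᵢ| A_r(uᵢ²)` by Jensen. The dominating series sums to `A_r f`, which tends to `f(x)`: this is the
Lebesgue point hypothesis. Dominated convergence in Pratt's form (`tendsto_tsum_of_tendsto_bound`)
then gives `∑ λᵢ (A_r uᵢ)² → ∑ λᵢ uᵢ(x)²`.
-/

open MeasureTheory Metric Filter Topology

noncomputable section

/-- The MDS kernel `k(x,y) = -(1/2) d(x,y)²`. -/
def mdsK {X : Type*} [MetricSpace X] (x y : X) : ℝ := -(1/2) * dist x y ^ 2

/-- The centered MDS kernel. -/
def mdsKT {X : Type*} [MetricSpace X] [MeasurableSpace X] (μ : Measure X) (x y : X) : ℝ :=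
  mdsK x y - (∫ y', mdsK x y' ∂μ) - (∫ x', mdsK x' y ∂μ) + ∫ x', ∫ y', mdsK x' y' ∂μ ∂μ

/-- `x` is a Lebesgue point of `f`: all balls around `x` have positive measure and the averages
of `f` over `B_r(x)` converge to `f(x)` as `r → 0⁺`. -/
def IsLebPoint {X : Type*} [MetricSpace X] [MeasurableSpace X]
    (μ : Measure X) (f : X → ℝ) (x : X) : Prop :=
  (∀ r > 0, 0 < μ (ball x r)) ∧
  Tendsto (fun r : ℝ => (μ (ball x r)).toReal⁻¹ * ∫ y in ball x r, f y ∂μ)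
    (𝓝[>] 0) (𝓝 (f x))

/-! ### Limits of series, averages and `L²` limits -/

/-- Pratt's form of dominated convergence for series: the dominating series `∑ b r i` may vary with
`r`, provided that it converges, termwise and in sum, to `∑ B i`. It is this form which is
available for averages at a Lebesgue point, where no dominating series independent of the radius
is at hand. -/
lemma tendsto_tsum_of_tendsto_bound {α : Type*} {l : Filter α} {a b : α → ℕ → ℝ} {A B : ℕ → ℝ}
    (ha : ∀ i, Tendsto (fun r => a r i) l (𝓝 (A i)))
    (hb : ∀ i, Tendsto (fun r => b r i) l (𝓝 (B i)))
    (hab : ∀ᶠ r in l, ∀ i, |a r i| ≤ b r i)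
    (hbs : ∀ᶠ r in l, Summable (b r)) (hB : Summable B) (hAB : ∀ i, |A i| ≤ B i)
    (hsum : Tendsto (fun r => ∑' i, b r i) l (𝓝 (∑' i, B i))) :
    Tendsto (fun r => ∑' i, a r i) l (𝓝 (∑' i, A i)) := by
  rw [Metric.tendsto_nhds]
  intro ε hε
  have hA : Summable A := Summable.of_norm_bounded hB hAB
  -- choose `N` so that the tail of `∑ B i` beyond `N` is small
  have hN : ∀ᶠ N in atTop, ∑' i, B i - ∑ i ∈ Finset.range N, B i < ε / 5 := by
    have := (tendsto_const_nhds (x := ∑' i, B i)).sub hB.hasSum.tendsto_sum_nat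
    rw [sub_self] at this
    exact this.eventually_lt_const (by positivity)
  obtain ⟨N, hN⟩ := hN.exists
  have h1 : Tendsto (fun r => ∑ i ∈ Finset.range N, a r i) l (𝓝 (∑ i ∈ Finset.range N, A i)) :=
    tendsto_finsetSum _ fun i _ => ha i
  have h2 : Tendsto (fun r => ∑' i, b r i - ∑ i ∈ Finset.range N, b r i) l
      (𝓝 (∑' i, B i - ∑ i ∈ Finset.range N, B i)) :=
    hsum.sub (tendsto_finsetSum _ fun i _ => hb i)
  have tail : ∀ {c d : ℕ → ℝ}, Summable d → (∀ i, |c i| ≤ d i) →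
      |∑' i, c i - ∑ i ∈ Finset.range N, c i| ≤ ∑' i, d i - ∑ i ∈ Finset.range N, d i := by
    intro c d hd hcd
    have hc : Summable c := Summable.of_norm_bounded hd hcd
    rw [← hc.sum_add_tsum_nat_add N, ← hd.sum_add_tsum_nat_add N, add_sub_cancel_left,
      add_sub_cancel_left]
    exact tsum_of_norm_bounded (f := fun i => c (i + N)) ((summable_nat_add_iff N).2 hd).hasSum
      fun i => hcd (i + N)
  filter_upwards [(Metric.tendsto_nhds.1 h1) (ε / 5) (by positivity),
    h2.eventually_lt_const (show _ < ε / 5 from hN), hab, hbs] with r hr1 hr2 hr3 hr4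
  have t1 := tail hr4 hr3
  have t2 := tail hB hAB
  rw [Real.dist_eq] at *
  rw [abs_le] at t1 t2
  rw [abs_lt] at *
  constructor <;> linarith

lemma tendsto_average_ball {Y : Type*} [PseudoMetricSpace Y] [MeasurableSpace Y]
    [OpensMeasurableSpace Y] (ν : Measure Y) [IsFiniteMeasure ν] {g : Y → ℝ}
    (hg : Integrable g ν) {y : Y} (hc : ContinuousAt g y) (hpos : ∀ r > 0, 0 < ν (ball y r)) :
    Tendsto (fun r : ℝ => (ν (ball y r)).toReal⁻¹ * ∫ w in ball y r, g w ∂ν)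
      (𝓝[>] 0) (𝓝 (g y)) := by
  rw [Metric.tendsto_nhds]
  intro ε hε
  obtain ⟨δ, hδ, h⟩ := Metric.continuousAt_iff.1 hc (ε / 2) (by positivity)
  filter_upwards [Ioo_mem_nhdsGT hδ] with r hr
  have hV : 0 < (ν (ball y r)).toReal :=
    ENNReal.toReal_pos (hpos r hr.1).ne' (measure_ne_top _ _)
  have h1 : ‖∫ w in ball y r, (g w - g y) ∂ν‖ ≤ ε / 2 * ν.real (ball y r) := by
    refine norm_setIntegral_le_of_norm_le_const (measure_lt_top _ _) fun w hw => ?_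
    have := h (lt_trans (mem_ball.1 hw) hr.2)
    exact this.le
  rw [integral_sub hg.integrableOn (integrable_const _), setIntegral_const, smul_eq_mul,
    Real.norm_eq_abs] at h1
  simp only [Measure.real] at h1
  rw [Real.dist_eq]
  set V := (ν (ball y r)).toReal
  set I := ∫ w in ball y r, g w ∂ν
  have h2 : V⁻¹ * I - g y = V⁻¹ * (I - V * g y) := by field_simp
  rw [h2, abs_mul, abs_of_pos (inv_pos.2 hV)]
  calc V⁻¹ * |I - V * g y| ≤ V⁻¹ * (ε / 2 * V) := by gcongr
    _ = ε / 2 := by field_simp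
    _ < ε := by linarith

/-- An `L²` limit and an almost everywhere limit of the same sequence agree almost everywhere, by
Fatou's lemma. -/
lemma ae_eq_of_tendsto_integral_sq {Ω : Type*} [MeasurableSpace Ω] {ν : Measure Ω}
    {g L : Ω → ℝ} {S : ℕ → Ω → ℝ} (hg : Measurable g) (hS : ∀ n, Measurable (S n))
    (hint : ∀ n, Integrable (fun p => (g p - S n p) ^ 2) ν)
    (h0 : Tendsto (fun n => ∫ p, (g p - S n p) ^ 2 ∂ν) atTop (𝓝 0))
    (hL : ∀ᵐ p ∂ν, Tendsto (fun n => S n p) atTop (𝓝 (L p))) : ∀ᵐ p ∂ν, g p = L p := by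
  have hm : ∀ n, Measurable fun p => ENNReal.ofReal ((g p - S n p) ^ 2) := fun n =>
    ((hg.sub (hS n)).pow_const 2).ennreal_ofReal
  have hF := lintegral_liminf_le (μ := ν) (u := atTop) hm
  have hz : liminf (fun n => ∫⁻ p, ENNReal.ofReal ((g p - S n p) ^ 2) ∂ν) atTop = 0 := by
    refine Tendsto.liminf_eq ?_
    simp_rw [← fun n => ofReal_integral_eq_lintegral_ofReal (hint n)
      (Eventually.of_forall fun p => sq_nonneg _)]
    simpa using ENNReal.tendsto_ofReal h0
  rw [hz, nonpos_iff_eq_zero, lintegral_eq_zero_iff (.liminf hm)] at hF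
  filter_upwards [hF, hL] with p hp hpL
  have : Tendsto (fun n => ENNReal.ofReal ((g p - S n p) ^ 2)) atTop
      (𝓝 (ENNReal.ofReal ((g p - L p) ^ 2))) :=
    ENNReal.tendsto_ofReal ((tendsto_const_nhds.sub hpL).pow 2)
  rw [this.liminf_eq] at hp
  have h3 : (g p - L p) ^ 2 ≤ 0 := ENNReal.ofReal_eq_zero.1 hp
  have h4 : g p - L p = 0 := by nlinarith
  linarith

/-- Jensen's inequality for the square of an average, where `V` is the total mass. -/
lemma sq_average_le {Ω : Type*} [MeasurableSpace Ω] {ν : Measure Ω} [IsFiniteMeasure ν]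
    {v : Ω → ℝ} (hv : Integrable v ν) (hv2 : Integrable (fun x => v x ^ 2) ν) {V : ℝ}
    (hV : V = ν.real Set.univ) (hpos : 0 < V) :
    (V⁻¹ * ∫ x, v x ∂ν) ^ 2 ≤ V⁻¹ * ∫ x, v x ^ 2 ∂ν := by
  set m := V⁻¹ * ∫ x, v x ∂ν with hm
  have h0 : 0 ≤ ∫ x, (v x - m) ^ 2 ∂ν := integral_nonneg fun x => sq_nonneg _
  have h1 : ∫ x, (v x - m) ^ 2 ∂ν = ∫ x, v x ^ 2 ∂ν - 2 * m * (∫ x, v x ∂ν) + m ^ 2 * V := by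
    have : ∀ x, (v x - m) ^ 2 = v x ^ 2 - 2 * m * v x + m ^ 2 := fun x => by ring
    simp_rw [this]
    rw [integral_add (f := fun x => v x ^ 2 - 2 * m * v x) (hv2.sub (hv.const_mul _))
      (integrable_const _), integral_sub hv2 (hv.const_mul _), integral_const_mul,
      integral_const, ← hV, smul_eq_mul]
    ring
  have h2 : ∫ x, v x ∂ν = V * m := by rw [hm]; field_simp
  rw [h1, h2] at h0
  have h3 : m ^ 2 * V ≤ ∫ x, v x ^ 2 ∂ν := by nlinarith
  rw [inv_mul_eq_div, le_div_iff₀ hpos]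
  exact h3

/-! ### Continuity and integrability of the MDS kernel -/

section Kernel

variable {X : Type*} [MetricSpace X]

lemma mdsK_comm (x y : X) : mdsK x y = mdsK y x := by simp [mdsK, dist_comm]

lemma continuous_mdsK : Continuous fun p : X × X => mdsK p.1 p.2 := by
  unfold mdsK; fun_prop

lemma abs_mdsK_le (z x y : X) : |mdsK x y| ≤ dist z x ^ 2 + dist z y ^ 2 := by
  have h := dist_triangle_left x y z
  have h0 : 0 ≤ dist x y := dist_nonneg
  rw [mdsK, abs_le]
  constructor <;> nlinarith [sq_nonneg (dist z x - dist z y), sq_nonneg (dist z x),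
    sq_nonneg (dist z y), sq_nonneg (dist x y)]

/-- The centered kernel in terms of the single marginal `x ↦ ∫ mdsK x w ∂μ`, by symmetry of
`mdsK`. -/
lemma mdsKT_eq [MeasurableSpace X] (μ : Measure X) (x y : X) :
    mdsKT μ x y = mdsK x y - (∫ w, mdsK x w ∂μ) - (∫ w, mdsK y w ∂μ)
      + ∫ v, ∫ w, mdsK v w ∂μ ∂μ := by
  simp only [mdsKT, mdsK_comm _ y]

lemma memLp_dist_sq [MeasurableSpace X] [OpensMeasurableSpace X] {μ : Measure X} {z : X}
    (hz : Integrable (fun y => dist z y ^ 4) μ) : MemLp (fun y => dist z y ^ 2) 2 μ := by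
  rw [memLp_two_iff_integrable_sq (Measurable.aestronglyMeasurable (by fun_prop))]
  simpa [← pow_mul] using hz

lemma integrable_dist_sq [MeasurableSpace X] [OpensMeasurableSpace X] {μ : Measure X}
    [IsFiniteMeasure μ] {z : X} (hz : Integrable (fun y => dist z y ^ 4) μ) :
    Integrable (fun y => dist z y ^ 2) μ := (memLp_dist_sq hz).integrable (by norm_num)

variable [MeasurableSpace X] [BorelSpace X]
  {μ : Measure X} [IsProbabilityMeasure μ] {z : X}

lemma abs_integral_mdsK_le (hz : Integrable (fun y => dist z y ^ 4) μ) (x : X) :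
    |∫ y, mdsK x y ∂μ| ≤ dist z x ^ 2 + ∫ y, dist z y ^ 2 ∂μ := by
  have h2 := integrable_dist_sq hz
  refine (norm_integral_le_of_norm_le (f := fun y => mdsK x y)
    (g := fun y => dist z x ^ 2 + dist z y ^ 2) ((integrable_const _).add h2)
    (.of_forall fun y => abs_mdsK_le z x y)).trans_eq ?_
  rw [integral_add (integrable_const _) h2]
  simp

lemma continuous_integral_mdsK (hz : Integrable (fun y => dist z y ^ 4) μ) :
    Continuous fun x => ∫ y, mdsK x y ∂μ := by
  have h2 := integrable_dist_sq hz
  refine continuous_iff_continuousAt.2 fun x₀ => ?_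
  refine continuousAt_of_dominated (bound := fun y => dist z x₀ ^ 2 + 1 + dist z y ^ 2)
    (.of_forall fun x => ?_) ?_ ((integrable_const _).add h2) (.of_forall fun y => ?_)
  · exact (continuous_mdsK.comp (Continuous.prodMk_right x)).aestronglyMeasurable
  · have : Tendsto (fun x => dist z x ^ 2) (𝓝 x₀) (𝓝 (dist z x₀ ^ 2)) :=
      Continuous.tendsto (by fun_prop) x₀
    filter_upwards [this.eventually_lt_const (lt_add_one _)] with x hx
    refine .of_forall fun y => (abs_mdsK_le z x y).trans ?_
    linarith
  · exact (continuous_mdsK.comp (Continuous.prodMk_left y)).continuousAt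

lemma continuous_mdsKT (hz : Integrable (fun y => dist z y ^ 4) μ) :
    Continuous fun p : X × X => mdsKT μ p.1 p.2 := by
  have ha := continuous_integral_mdsK hz
  simp only [mdsKT_eq]
  exact ((continuous_mdsK.sub (ha.comp continuous_fst)).sub (ha.comp continuous_snd)).add
    continuous_const

/-- Together with the fourth moment, this bound puts the kernel in `L²(μ ⊗ μ)` and dominates the
integrals that define the eigenfunctions. -/
lemma abs_mdsKT_le (hz : Integrable (fun y => dist z y ^ 4) μ) (x y : X) :
    |mdsKT μ x y| ≤ 2 * dist z x ^ 2 + 2 * dist z y ^ 2 + 4 * ∫ w, dist z w ^ 2 ∂μ := by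
  have h2 := integrable_dist_sq hz
  have hc : |∫ v, ∫ w, mdsK v w ∂μ ∂μ| ≤ 2 * ∫ w, dist z w ^ 2 ∂μ := by
    refine (norm_integral_le_of_norm_le (f := fun v => ∫ w, mdsK v w ∂μ)
      (g := fun v => dist z v ^ 2 + ∫ w, dist z w ^ 2 ∂μ) (h2.add (integrable_const _))
      (.of_forall fun v => abs_integral_mdsK_le hz v)).trans_eq ?_
    rw [integral_add h2 (integrable_const _)]
    simp; ring
  have h1 := abs_mdsK_le z x y
  have hx := abs_integral_mdsK_le hz x
  have hy := abs_integral_mdsK_le hz y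
  rw [mdsKT_eq]
  rw [abs_le] at *
  constructor <;> linarith

lemma continuous_mdsKT_right (hz : Integrable (fun y => dist z y ^ 4) μ) (x : X) :
    Continuous fun y => mdsKT μ x y := (continuous_mdsKT hz).comp (Continuous.prodMk_right x)

lemma continuous_mdsKT_left (hz : Integrable (fun y => dist z y ^ 4) μ) (y : X) :
    Continuous fun x => mdsKT μ x y := (continuous_mdsKT hz).comp (Continuous.prodMk_left y)

lemma memLp_mdsKT [SecondCountableTopology X] (hz : Integrable (fun y => dist z y ^ 4) μ) :
    MemLp (fun p : X × X => mdsKT μ p.1 p.2) 2 (μ.prod μ) := by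
  have h := memLp_dist_sq hz
  have hb : MemLp (fun p : X × X => 2 * dist z p.1 ^ 2 + 2 * dist z p.2 ^ 2
      + 4 * ∫ w, dist z w ^ 2 ∂μ) 2 (μ.prod μ) :=
    (((h.comp_fst μ).const_mul 2).add ((h.comp_snd μ).const_mul 2)).add (memLp_const _)
  exact hb.mono' (continuous_mdsKT hz).aestronglyMeasurable
    (.of_forall fun p => abs_mdsKT_le hz p.1 p.2)

/-- The image under the MDS operator of a square integrable function is continuous. In particular,
eigenfunctions for nonzero eigenvalues are continuous. -/
lemma continuous_integral_mdsKT_mul (hz : Integrable (fun y => dist z y ^ 4) μ) {v : X → ℝ}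
    (hv : MemLp v 2 μ) : Continuous fun x => ∫ y, mdsKT μ x y * v y ∂μ := by
  refine continuous_iff_continuousAt.2 fun x₀ => ?_
  set M := ∫ w, dist z w ^ 2 ∂μ
  have hb : MemLp (fun y => 2 * (dist z x₀ ^ 2 + 1) + 2 * dist z y ^ 2 + 4 * M) 2 μ :=
    have h1 : MemLp (fun _ : X => 2 * (dist z x₀ ^ 2 + 1)) 2 μ := memLp_const _
    have h2 : MemLp (fun y => 2 * dist z y ^ 2) 2 μ := (memLp_dist_sq hz).const_mul 2
    have h3 : MemLp (fun _ : X => 4 * M) 2 μ := memLp_const _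
    (h1.add h2).add h3
  refine continuousAt_of_dominated
    (bound := fun y => (2 * (dist z x₀ ^ 2 + 1) + 2 * dist z y ^ 2 + 4 * M) * |v y|)
    (.of_forall fun x => ?_) ?_ (hb.integrable_mul hv.norm) (.of_forall fun y => ?_)
  · exact (continuous_mdsKT_right hz x).aestronglyMeasurable.mul hv.1
  · have : Tendsto (fun x => dist z x ^ 2) (𝓝 x₀) (𝓝 (dist z x₀ ^ 2)) :=
      Continuous.tendsto (by fun_prop) x₀
    filter_upwards [this.eventually_lt_const (lt_add_one _)] with x hx
    refine .of_forall fun y => ?_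
    rw [Real.norm_eq_abs, abs_mul]
    gcongr
    refine (abs_mdsKT_le hz x y).trans ?_
    gcongr
  · exact ((continuous_mdsKT_left hz y).mul continuous_const).continuousAt

end Kernel

/-! ### Integrated and diagonal expansions of the kernel -/

section Expansion

variable {X : Type*} [MetricSpace X] [SecondCountableTopology X] [MeasurableSpace X]
  [BorelSpace X] {μ : Measure X} [IsProbabilityMeasure μ] {z : X} {lam : ℕ → ℝ} {u : ℕ → X → ℝ}

lemma abs_mul_mul_le (a s t : ℝ) : |a * s * t| ≤ |a| * s ^ 2 + |a| * t ^ 2 := by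
  rw [abs_mul, abs_mul, mul_assoc, ← mul_add]
  refine mul_le_mul_of_nonneg_left ?_ (abs_nonneg a)
  nlinarith [sq_nonneg (|s| - |t|), sq_abs s, sq_abs t, sq_nonneg s, sq_nonneg t]

/-- For a trace class sequence of weights, `∑ |λᵢ| vᵢ²` converges almost everywhere, so that its
`tsum` is not a junk value there, and it may be integrated term by term over any set. -/
lemma ae_summable_and_hasSum_setIntegral {Ω : Type*} [MeasurableSpace Ω] {ν : Measure Ω}
    {v : ℕ → Ω → ℝ} (hv2 : ∀ i, Integrable (fun x => v i x ^ 2) ν)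
    (hone : ∀ i, ∫ x, v i x ^ 2 ∂ν = 1) (htrace : Summable fun i => |lam i|) :
    (∀ᵐ x ∂ν, Summable fun i => |lam i| * v i x ^ 2) ∧
    ∀ B : Set Ω, HasSum (fun i => |lam i| * ∫ x in B, v i x ^ 2 ∂ν)
      (∫ x in B, ∑' i, |lam i| * v i x ^ 2 ∂ν) := by
  have hnn : ∀ i x, 0 ≤ |lam i| * v i x ^ 2 := fun i x => by positivity
  have hint : ∀ i, Integrable (fun x => |lam i| * v i x ^ 2) ν := fun i => (hv2 i).const_mul _
  constructor
  · have hlt : ∫⁻ x, ∑' i, ENNReal.ofReal (|lam i| * v i x ^ 2) ∂ν ≠ ⊤ := by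
      rw [lintegral_tsum fun i => (hint i).1.aemeasurable.ennreal_ofReal]
      have : ∀ i, ∫⁻ x, ENNReal.ofReal (|lam i| * v i x ^ 2) ∂ν = ENNReal.ofReal |lam i| := by
        intro i
        rw [← ofReal_integral_eq_lintegral_ofReal (hint i) (.of_forall (hnn i)),
          integral_const_mul, hone, mul_one]
      simp_rw [this]
      exact htrace.tsum_ofReal_ne_top
    filter_upwards [ae_lt_top' (AEMeasurable.tsum
      fun i => (hint i).1.aemeasurable.ennreal_ofReal) hlt] with x hx
    have := ENNReal.summable_toReal hx.ne
    simpa only [ENNReal.toReal_ofReal (hnn _ x)] using this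
  · intro B
    have := hasSum_integral_of_summable_integral_norm (μ := ν.restrict B)
      (F := fun i x => |lam i| * v i x ^ 2) (fun i => (hint i).integrableOn) ?_
    · simpa only [integral_const_mul] using this
    · refine Summable.of_nonneg_of_le (fun i => integral_nonneg fun x => norm_nonneg _)
        (fun i => ?_) htrace
      simp only [Real.norm_of_nonneg (hnn i _)]
      refine (setIntegral_le_integral (hint i) (.of_forall (hnn i))).trans_eq ?_
      rw [integral_const_mul, hone, mul_one]

/-- Term by term integration of `∑ λᵢ vᵢ(x) vᵢ(y)` over `B × B`, with Fubini in each term. -/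
lemma hasSum_setIntegral_prod {Ω : Type*} [MeasurableSpace Ω] {ν : Measure Ω}
    [IsProbabilityMeasure ν] {v : ℕ → Ω → ℝ} (hL2 : ∀ i, MemLp (v i) 2 ν)
    (hone : ∀ i, ∫ x, v i x ^ 2 ∂ν = 1) (htrace : Summable fun i => |lam i|) (B : Set Ω) :
    HasSum (fun i => lam i * (∫ x in B, v i x ∂ν) ^ 2)
      (∫ p in B ×ˢ B, ∑' i, lam i * v i p.1 * v i p.2 ∂(ν.prod ν)) := by
  have hint : ∀ i, Integrable (fun p : Ω × Ω => v i p.1 * v i p.2) (ν.prod ν) := fun i =>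
    ((hL2 i).integrable (by norm_num)).mul_prod ((hL2 i).integrable (by norm_num))
  have key := hasSum_integral_of_summable_integral_norm (μ := (ν.prod ν).restrict (B ×ˢ B))
      (F := fun i p => lam i * (v i p.1 * v i p.2))
      (fun i => ((hint i).const_mul _).integrableOn) ?_
  · simpa only [integral_const_mul, setIntegral_prod_mul, ← sq, mul_assoc] using key
  · refine Summable.of_nonneg_of_le (fun i => integral_nonneg fun x => norm_nonneg _)
        (fun i => ?_) htrace
    refine (setIntegral_le_integral ((hint i).const_mul _).norm
      (.of_forall fun p => norm_nonneg _)).trans ?_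
    simp only [norm_mul, integral_const_mul]
    rw [integral_prod_mul (fun x => ‖v i x‖) (fun x => ‖v i x‖), ← sq, Real.norm_eq_abs]
    have h1 := sq_average_le (V := 1) (v := fun x => ‖v i x‖) (ν := ν)
      ((hL2 i).integrable (by norm_num)).norm (hL2 i).norm.integrable_sq (by simp) one_pos
    simp only [inv_one, one_mul, Real.norm_eq_abs, sq_abs, hone] at h1 ⊢
    exact mul_le_of_le_one_right (abs_nonneg _) h1

/-- The kernel expansion on the diagonal. Since the diagonal may be `μ ⊗ μ`-null, this does not
follow from the almost everywhere expansion `hK`. Both sides are limits of the averages of the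
kernel over `ball x r ×ˢ ball x r` as `r → 0`. -/
lemma tsum_diag_eq (hz : Integrable (fun y => dist z y ^ 4) μ)
    (hL2 : ∀ i, MemLp (u i) 2 μ) (hcont : ∀ i, lam i ≠ 0 → Continuous (u i))
    (hone : ∀ i, ∫ x, u i x ^ 2 ∂μ = 1) (htrace : Summable fun i => |lam i|)
    (hK : ∀ᵐ p ∂(μ.prod μ), mdsKT μ p.1 p.2 = ∑' i, lam i * u i p.1 * u i p.2)
    {x : X} (hsum : Summable fun i => |lam i| * u i x ^ 2)
    (hleb : IsLebPoint μ (fun x => ∑' i, |lam i| * u i x ^ 2) x) :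
    ∑' i, lam i * u i x ^ 2 = mdsKT μ x x := by
  obtain ⟨hpos, hlim⟩ := hleb
  set V : ℝ → ℝ := fun r => (μ (ball x r)).toReal with hV
  have hVpos : ∀ r > 0, 0 < V r := fun r hr =>
    ENNReal.toReal_pos (hpos r hr).ne' (measure_ne_top _ _)
  have hint : ∀ i, Integrable (u i) μ := fun i => (hL2 i).integrable (by norm_num)
  have hsq : ∀ i, Integrable (fun x => u i x ^ 2) μ := fun i => (hL2 i).integrable_sq
  have hHS := (ae_summable_and_hasSum_setIntegral hsq hone htrace).2
  have hb : ∀ r, HasSum (fun i => |lam i| * ((V r)⁻¹ * ∫ y in ball x r, u i y ^ 2 ∂μ))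
      ((V r)⁻¹ * ∫ y in ball x r, ∑' i, |lam i| * u i y ^ 2 ∂μ) := fun r => by
    simpa only [mul_left_comm] using (hHS (ball x r)).mul_left (V r)⁻¹
  -- averages of the expansion over `ball x r ×ˢ ball x r`, computed by Fubini
  have ha : ∀ r, ∑' i, lam i * ((V r)⁻¹ * ∫ y in ball x r, u i y ∂μ) ^ 2 =
      ((μ.prod μ) (ball (x, x) r)).toReal⁻¹ *
        ∫ p in ball (x, x) r, mdsKT μ p.1 p.2 ∂(μ.prod μ) := fun r => by
    have h1 := (hasSum_setIntegral_prod hL2 hone htrace (ball x r)).mul_left ((V r)⁻¹ ^ 2)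
    rw [← ball_prod_same, Measure.prod_prod, ENNReal.toReal_mul,
      integral_congr_ae (ae_restrict_of_ae hK)]
    rw [mul_inv, ← sq, ← h1.tsum_eq]
    exact tsum_congr fun i => by ring
  have lim1 : Tendsto (fun r => ∑' i, lam i * ((V r)⁻¹ * ∫ y in ball x r, u i y ∂μ) ^ 2)
      (𝓝[>] 0) (𝓝 (mdsKT μ x x)) := by
    simp only [ha]
    refine tendsto_average_ball (μ.prod μ) (y := (x, x))
      ((memLp_mdsKT hz).integrable (by norm_num)) (continuous_mdsKT hz).continuousAt fun r hr => ?_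
    rw [← ball_prod_same, Measure.prod_prod]
    exact ENNReal.mul_pos (hpos r hr).ne' (hpos r hr).ne'
  have lim2 : Tendsto (fun r => ∑' i, lam i * ((V r)⁻¹ * ∫ y in ball x r, u i y ∂μ) ^ 2)
      (𝓝[>] 0) (𝓝 (∑' i, lam i * u i x ^ 2)) := by
    refine tendsto_tsum_of_tendsto_bound
      (b := fun r i => |lam i| * ((V r)⁻¹ * ∫ y in ball x r, u i y ^ 2 ∂μ))
      (B := fun i => |lam i| * u i x ^ 2) (fun i => ?_) (fun i => ?_) ?_ ?_ hsum (fun i => ?_) ?_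
    · rcases eq_or_ne (lam i) 0 with h | h
      · simp [h]
      · exact ((tendsto_average_ball μ (hint i) (hcont i h).continuousAt hpos).pow 2).const_mul _
    · rcases eq_or_ne (lam i) 0 with h | h
      · simp [h]
      · exact (tendsto_average_ball μ (hsq i) ((hcont i h).pow 2).continuousAt hpos).const_mul _
    · filter_upwards [self_mem_nhdsWithin] with r hr i
      rw [abs_mul, abs_sq]
      refine mul_le_mul_of_nonneg_left ?_ (abs_nonneg _)
      exact sq_average_le (hint i).integrableOn (hsq i).integrableOn
        (by simp [hV, Measure.real]) (hVpos r hr)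
    · exact .of_forall fun r => (hb r).summable
    · rw [abs_mul, abs_sq]
    · simpa only [(hb _).tsum_eq] using hlim
  exact tendsto_nhds_unique lim2 lim1

end Expansion

/-- Theorem 4.2: if `T` is trace class and μ-a.e. point is a Lebesgue point of
`f = Σ |λᵢ| uᵢ²`, then for `μ ⊗ μ`-a.e. `(x,y)` the series `Σ λᵢ (uᵢ(x) - uᵢ(y))²` converges
absolutely and equals `d(x,y)²`. -/
theorem d2_decomposition
    {X : Type*} [MetricSpace X] [CompleteSpace X] [SecondCountableTopology X]
    [MeasurableSpace X] [BorelSpace X]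
    (μ : Measure X) [IsProbabilityMeasure μ]
    (hmom : ∃ z : X, Integrable (fun y => dist z y ^ 4) μ)
    (lam : ℕ → ℝ) (u : ℕ → X → ℝ)
    (hmeas : ∀ i, Measurable (u i))
    (heig : ∀ i, lam i ≠ 0 → ∀ x, lam i * u i x = ∫ y, mdsKT μ x y * u i y ∂μ)
    (horth : ∀ i j, (∫ x, u i x * u j x ∂μ) = if i = j then 1 else 0)
    (htrace : Summable fun i => |lam i|)
    (hbasis : Tendsto
      (fun n => ∫ p, (mdsKT μ p.1 p.2 - ∑ i ∈ Finset.range n, lam i * u i p.1 * u i p.2) ^ 2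
        ∂(μ.prod μ)) atTop (𝓝 0))
    (f : X → ℝ) (hf : f = fun x => ∑' i, |lam i| * (u i x) ^ 2)
    (hfint : Integrable f μ)
    (hleb : ∀ᵐ x ∂μ, IsLebPoint μ f x) :
    ∀ᵐ p ∂(μ.prod μ),
      (Summable fun i => |lam i| * (u i p.1 - u i p.2) ^ 2) ∧
      (∑' i, lam i * (u i p.1 - u i p.2) ^ 2) = dist p.1 p.2 ^ 2 := by
  obtain ⟨z, hz⟩ := hmom
  subst hf
  have hone : ∀ i, ∫ x, u i x ^ 2 ∂μ = 1 := fun i => by simpa [← sq] using horth i i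
  -- an integral equal to `1` is not the junk value `0`, so `u i` is square integrable
  have hL2 : ∀ i, MemLp (u i) 2 μ := fun i =>
    (memLp_two_iff_integrable_sq (hmeas i).aestronglyMeasurable).2 <|
      not_imp_comm.1 integral_undef (by rw [hone]; exact one_ne_zero)
  have hcont : ∀ i, lam i ≠ 0 → Continuous (u i) := fun i hi => by
    have h1 : u i = fun x => (lam i)⁻¹ * ∫ y, mdsKT μ x y * u i y ∂μ := by
      funext x; rw [← heig i hi x, inv_mul_cancel_left₀ hi]
    rw [h1]
    exact (continuous_integral_mdsKT_mul hz (hL2 i)).const_mul _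
  have hint : ∀ i, Integrable (u i) μ := fun i => (hL2 i).integrable (by norm_num)
  have hsum := (ae_summable_and_hasSum_setIntegral (fun i => (hL2 i).integrable_sq) hone htrace).1
  have hsum1 : ∀ᵐ p ∂(μ.prod μ), Summable fun i => |lam i| * u i p.1 ^ 2 :=
    Measure.quasiMeasurePreserving_fst.ae hsum
  have hsum2 : ∀ᵐ p ∂(μ.prod μ), Summable fun i => |lam i| * u i p.2 ^ 2 :=
    Measure.quasiMeasurePreserving_snd.ae hsum
  have hK : ∀ᵐ p ∂(μ.prod μ), mdsKT μ p.1 p.2 = ∑' i, lam i * u i p.1 * u i p.2 := by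
    refine ae_eq_of_tendsto_integral_sq (continuous_mdsKT hz).measurable
      (S := fun n p => ∑ i ∈ Finset.range n, lam i * u i p.1 * u i p.2) (fun n => ?_)
      (fun n => ?_) hbasis ?_
    · fun_prop
    · refine MemLp.integrable_sq ((memLp_mdsKT hz).sub (memLp_finsetSum _ fun i _ => ?_))
      rw [memLp_two_iff_integrable_sq (by fun_prop)]
      have h := ((hL2 i).integrable_sq.mul_prod (hL2 i).integrable_sq).const_mul (lam i ^ 2)
      refine h.congr (.of_forall fun p => ?_)
      simp only
      ring
    · filter_upwards [hsum1, hsum2] with p h1 h2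
      exact (Summable.of_norm_bounded (h1.add h2)
        fun i => abs_mul_mul_le _ _ _).hasSum.tendsto_sum_nat
  have hdiag : ∀ᵐ x ∂μ, ∑' i, lam i * u i x ^ 2 = mdsKT μ x x := by
    filter_upwards [hsum, hleb] with x h1 h2
    exact tsum_diag_eq hz hL2 hcont hone htrace hK h1 h2
  filter_upwards [hsum1, hsum2, hK, Measure.quasiMeasurePreserving_fst.ae hdiag,
    Measure.quasiMeasurePreserving_snd.ae hdiag] with p h1 h2 hp hd1 hd2
  constructor
  · refine Summable.of_nonneg_of_le (fun i => by positivity) (fun i => ?_)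
      ((h1.add h2).mul_left 2)
    rw [← mul_add, mul_left_comm]
    refine mul_le_mul_of_nonneg_left ?_ (abs_nonneg _)
    nlinarith [sq_nonneg (u i p.1 + u i p.2)]
  · have s1 : Summable fun i => lam i * u i p.1 ^ 2 :=
      Summable.of_norm_bounded h1 fun i => by simp
    have s2 : Summable fun i => lam i * u i p.2 ^ 2 :=
      Summable.of_norm_bounded h2 fun i => by simp
    have s3 : Summable fun i => lam i * u i p.1 * u i p.2 :=
      Summable.of_norm_bounded (h1.add h2) fun i => abs_mul_mul_le _ _ _
    have h3 : ∀ i, lam i * (u i p.1 - u i p.2) ^ 2 =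
        lam i * u i p.1 ^ 2 + lam i * u i p.2 ^ 2 - 2 * (lam i * u i p.1 * u i p.2) :=
      fun i => by ring
    rw [tsum_congr h3, (s1.add s2).tsum_sub (s3.mul_left 2), s1.tsum_add s2, tsum_mul_left,
      hd1, hd2, ← hp]
    simp only [mdsKT_eq, mdsK, dist_self]
    ring
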